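/- (Gibbs–Gaussian integration by parts.) Let Σ be an at most countable set, let (x(σ))_{σ∈Σ} and (y(σ))_{σ∈Σ} be jointly Gaussian centered processes with uniformly bounded variances, let C(σ¹, σ²) = E[x(σ¹) y(σ²)], let G' be a finite measure on Σ, let Z = Σ_σ e^{y(σ)} G'(σ), and let G(σ) = e^{y(σ)} G'(σ)/Z. Then E⟨x(σ)⟩_G = E⟨C(σ¹,σ¹) − C(σ¹,σ²)⟩_{G^{⊗2}}, and for any bounded measurable f on Σⁿ: E⟨f(σ¹,…,σⁿ) x(σ¹)⟩_{G^{⊗n}} = E⟨f(σ¹,…,σⁿ) ( Σ_{k=1}^{n} C(σ¹,σᵏ) − n C(σ¹,σ^{n+1}) )⟩_{G^{⊗(n+1)}}. -/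

import Mathlib

open MeasureTheory ProbabilityTheory Filter Real
open scoped ENNReal NNReal Classical BigOperators Topology

noncomputable section

/-- The Gibbs weight on a countable set: `G(σ) = e^{y(σ)} G'(σ) / Z` with
`Z = ∑_σ e^{y(σ)} G'(σ)`, for a finite measure with weights `w = G'`. -/
def gibbsW {Ω S : Type} (y : S → Ω → ℝ) (w : S → ℝ) (σ : S) (ω : Ω) : ℝ :=
  Real.exp (y σ ω) * w σ / ∑' τ : S, Real.exp (y τ ω) * w τ

/-- The mutual covariance `C(σ¹,σ²) = E[x(σ¹) y(σ²)]` of two centered processes. -/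
def cov {Ω S : Type} [MeasurableSpace Ω] (P : Measure Ω) (x y : S → Ω → ℝ)
    (σ₁ σ₂ : S) : ℝ :=
  ∫ ω, x σ₁ ω * y σ₂ ω ∂P

/-!
Let `X` be a centred Gaussian variable, jointly Gaussian with the process `Y`. With
`a τ = cov[X, Y τ] / Var[X]`, the residual `R = Y - X • a` is uncorrelated with `X`, hence
independent of it. Conditionally on `R`, the one-dimensional formula `E[X F(X)] = Var[X] E[F'(X)]`
applies to `F t = Φ (R + t • a)`, so `E[X Φ(Y)]` is the expectation of the derivative of `Φ` at `Y`
in the direction `τ ↦ cov[X, Y τ]`.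

For a product of Gibbs weights at `σ¹, …, σⁿ` and `X = x(σ¹)`, the logarithmic derivative in that
direction is `∑ₖ (C(σ¹, σᵏ) - ⟨C(σ¹, ·)⟩)`; the `n` Gibbs averages `⟨C(σ¹, ·)⟩` are what the extra
replica `σⁿ⁺¹` integrates to. The sum over replicas can be exchanged with the expectation because
the weights are normalised and `G σ ≤ e^{y σ - y τ} w σ / w τ` whenever `w τ > 0`, while
`E[|x σ| e^{y σ - y τ}]` is bounded uniformly in `σ`.
-/

section GaussianIntegrationByParts

lemma hasDerivAt_gaussianPDFReal (μ : ℝ) (v : ℝ≥0) (t : ℝ) :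
    HasDerivAt (gaussianPDFReal μ v) (-((t - μ) / v) * gaussianPDFReal μ v t) t := by
  have hexponent : HasDerivAt (fun s : ℝ ↦ -(s - μ) ^ 2 / (2 * (v : ℝ))) (-((t - μ) / v)) t := by
    refine ((((hasDerivAt_id t).sub_const μ).pow 2).neg.div_const (2 * (v : ℝ))).congr_deriv ?_
    simp only [id, Nat.cast_ofNat, Nat.add_one_sub_one, pow_one, mul_one, neg_div]
    rw [mul_div_mul_left _ _ two_ne_zero]
  rw [gaussianPDFReal_def]
  exact (hexponent.exp.const_mul _).congr_deriv (by ring)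

lemma integrable_mul_gaussianPDFReal {μ : ℝ} {v : ℝ≥0} {f : ℝ → ℝ}
    (hf : Integrable f (gaussianReal μ v)) : Integrable (fun t ↦ f t * gaussianPDFReal μ v t) := by
  rcases eq_or_ne v 0 with rfl | hv
  · simp
  rw [gaussianReal_of_var_ne_zero _ hv, integrable_withDensity_iff_integrable_smul'
    (measurable_gaussianPDF _ _) (ae_of_all _ fun _ ↦ gaussianPDF_lt_top)] at hf
  simpa [mul_comm] using hf

lemma integral_mul_gaussianReal_eq_integral_deriv {v : ℝ≥0} {F F' : ℝ → ℝ}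
    (hF : ∀ t, HasDerivAt F (F' t) t) (hF_int : Integrable F (gaussianReal 0 v))
    (hmul_int : Integrable (fun t ↦ t * F t) (gaussianReal 0 v))
    (hF'_int : Integrable F' (gaussianReal 0 v)) :
    ∫ t, t * F t ∂gaussianReal 0 v = v * ∫ t, F' t ∂gaussianReal 0 v := by
  rcases eq_or_ne v 0 with rfl | hv
  · simp
  have hv' : (v : ℝ) ≠ 0 := by exact_mod_cast hv
  have hparts : ∫ t, F t * (-((t - 0) / v) * gaussianPDFReal 0 v t)
      = -∫ t, F' t * gaussianPDFReal 0 v t :=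
    integral_mul_deriv_eq_deriv_mul_of_integrable (fun t _ ↦ hF t)
      (fun t _ ↦ hasDerivAt_gaussianPDFReal 0 v t)
      (((integrable_mul_gaussianPDFReal hmul_int).const_mul (-(v : ℝ)⁻¹)).congr
        (ae_of_all _ fun t ↦ by simp only [Pi.mul_apply]; ring))
      (integrable_mul_gaussianPDFReal hF'_int) (integrable_mul_gaussianPDFReal hF_int)
  simp only [integral_gaussianReal_eq_integral_smul hv, smul_eq_mul]
  calc ∫ t, gaussianPDFReal 0 v t * (t * F t)
      = -(v : ℝ) * ∫ t, F t * (-((t - 0) / v) * gaussianPDFReal 0 v t) := by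
        rw [← integral_const_mul]
        congr 1 with t
        field_simp
        ring
    _ = v * ∫ t, gaussianPDFReal 0 v t * F' t := by
        rw [hparts]
        simp only [mul_comm (F' _)]
        ring

variable {Ω S : Type*} [MeasurableSpace Ω] {P : Measure Ω}

lemma isGaussianProcess_of_map_sum_eq_gaussianReal {X : S → Ω → ℝ}
    (hX : ∀ i, AEMeasurable (X i) P)
    (h : ∀ (s : Finset S) (c : S → ℝ), ∃ (m : ℝ) (v : ℝ≥0),
      P.map (fun ω ↦ ∑ i ∈ s, c i * X i ω) = gaussianReal m v) :
    IsGaussianProcess X P := by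
  refine ⟨fun I ↦ ⟨isGaussian_of_map_eq_gaussianReal fun L ↦ ?_⟩⟩
  obtain ⟨m, v, hv⟩ := h I (fun i ↦ if hi : i ∈ I then L (Pi.single ⟨i, hi⟩ 1) else 0)
  refine ⟨m, v, ?_⟩
  have hrestrict : AEMeasurable (fun ω ↦ I.restrict (X · ω)) P :=
    aemeasurable_pi_lambda _ fun i ↦ hX i
  rw [← hv, AEMeasurable.map_map_of_aemeasurable (by fun_prop) hrestrict]
  congr with ω
  rw [Function.comp_apply, pi_eq_sum_univ' (I.restrict (X · ω)), map_sum,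
    ← Finset.sum_coe_sort I]
  refine Finset.sum_congr rfl fun i _ ↦ ?_
  simp [mul_comm]

lemma hasDerivAt_comp_add_smul_of_hasLineDerivAt {E : Type*} [AddCommGroup E] [Module ℝ E]
    {Φ Φ' : E → ℝ} {r c : E} (h : ∀ r, HasLineDerivAt ℝ Φ (Φ' r) r c) (t : ℝ) :
    HasDerivAt (fun t ↦ Φ (r + t • c)) (Φ' (r + t • c)) t := by
  have := HasDerivAt.comp_sub_const t t (f := fun s ↦ Φ (r + t • c + s • c))
    (by rw [sub_self]; exact h _)
  simpa [add_assoc, ← add_smul] using this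

lemma integral_mul_comp_add_smul_gaussianReal {E : Type*} [AddCommGroup E] [Module ℝ E]
    {v : ℝ≥0} {Φ Φ' : E → ℝ} {r a : E} (h : ∀ r, HasLineDerivAt ℝ Φ (Φ' r) r (v • a))
    (hΦ_int : Integrable (fun t : ℝ ↦ Φ (r + t • a)) (gaussianReal 0 v))
    (hmul_int : Integrable (fun t : ℝ ↦ t * Φ (r + t • a)) (gaussianReal 0 v))
    (hΦ'_int : Integrable (fun t : ℝ ↦ Φ' (r + t • a)) (gaussianReal 0 v)) :
    ∫ t : ℝ, t * Φ (r + t • a) ∂gaussianReal 0 v = ∫ t : ℝ, Φ' (r + t • a) ∂gaussianReal 0 v := by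
  rcases eq_or_ne v 0 with rfl | hv
  · have hΦ' : Φ' r = 0 := (h r).unique (by rw [zero_smul]; exact hasLineDerivAt_zero)
    simp [hΦ']
  have hv' : (v : ℝ) ≠ 0 := by exact_mod_cast hv
  have ha (r : E) : HasLineDerivAt ℝ Φ ((v : ℝ)⁻¹ * Φ' r) r a := by
    rw [← hasLineDerivAt_smul_iff hv', smul_eq_mul, mul_inv_cancel_left₀ hv']
    exact h r
  rw [integral_mul_gaussianReal_eq_integral_deriv
    (fun t ↦ hasDerivAt_comp_add_smul_of_hasLineDerivAt ha t) hΦ_int hmul_int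
    (hΦ'_int.const_mul _), integral_const_mul, mul_inv_cancel_left₀ hv']

lemma covariance_eq_zero_of_variance_eq_zero {X Y : Ω → ℝ} [IsFiniteMeasure P] (hX : MemLp X 2 P)
    (hvar : Var[X; P] = 0) : cov[X, Y; P] = 0 := by
  refine integral_eq_zero_of_ae ?_
  filter_upwards [ae_eq_integral_of_variance_eq_zero hX hvar] with ω hω
  simp [hω]

lemma indepFun_sub_smul {X : Ω → ℝ} {Y : S → Ω → ℝ}
    (hXY : IsGaussianProcess (Sum.elim (fun _ : Unit ↦ X) Y) P) {a : S → ℝ}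
    (ha : ∀ τ, cov[X, Y τ; P] = a τ * Var[X; P]) :
    IndepFun X (fun ω τ ↦ Y τ ω - a τ * X ω) P := by
  have := hXY.isProbabilityMeasure
  have hX : HasGaussianLaw X P := hXY.hasGaussianLaw_eval (.inl ())
  have hY (τ : S) : HasGaussianLaw (Y τ) P := hXY.hasGaussianLaw_eval (.inr τ)
  have hpair : IsGaussianProcess (Sum.elim (fun _ : Unit ↦ X) fun τ ω ↦ Y τ ω - a τ * X ω) P := by
    refine hXY.of_isGaussianProcess ?_
    rintro (u | τ)
    · exact ⟨{.inl ()}, .proj ⟨.inl (), by simp⟩, fun ω ↦ by simp⟩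
    · exact ⟨{.inl (), .inr τ}, .proj ⟨.inr τ, by simp⟩ - a τ • .proj ⟨.inl (), by simp⟩,
        fun ω ↦ by simp⟩
  refine (hpair.indepFun_of_covariance_eq_zero (fun _ ↦ hX.aemeasurable)
    (fun τ ↦ (hY τ).aemeasurable.sub (hX.aemeasurable.const_mul _)) fun _ τ ↦ ?_).comp
    (φ := fun f : Unit → ℝ ↦ f ()) (measurable_pi_apply ()) measurable_id
  rw [covariance_fun_sub_right hX.memLp_two (hY τ).memLp_two (hX.memLp_two.const_mul _),
    covariance_const_mul_right, covariance_self hX.aemeasurable, ha, sub_self]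

lemma integral_comp_eq_integral_integral_of_indepFun {α β : Type*} [MeasurableSpace α]
    [MeasurableSpace β] [IsFiniteMeasure P] {X : Ω → α} {Y : Ω → β} (hXY : IndepFun X Y P)
    (hX : AEMeasurable X P) (hY : AEMeasurable Y P) {g : α × β → ℝ} (hg : Measurable g)
    (hint : Integrable (fun ω ↦ g (X ω, Y ω)) P) :
    (∀ᵐ s ∂P.map Y, Integrable (fun t ↦ g (t, s)) (P.map X)) ∧
      ∫ ω, g (X ω, Y ω) ∂P = ∫ s, ∫ t, g (t, s) ∂P.map X ∂P.map Y := by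
  have hprod := hXY.map_prod_eq_prod_map_map hX hY
  have hgprod : Integrable g ((P.map X).prod (P.map Y)) := by
    rw [← hprod]
    exact (integrable_map_measure hg.aestronglyMeasurable (hX.prodMk hY)).2 hint
  refine ⟨hgprod.prod_left_ae, ?_⟩
  rw [← integral_prod_symm _ hgprod, ← hprod,
    integral_map (hX.prodMk hY) hg.aestronglyMeasurable]

theorem integral_mul_comp_eq_integral_lineDeriv [Countable S] {X : Ω → ℝ} {Y : S → Ω → ℝ}
    (hXY : IsGaussianProcess (Sum.elim (fun _ : Unit ↦ X) Y) P) (hX0 : ∫ ω, X ω ∂P = 0)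
    {Φ Φ' : (S → ℝ) → ℝ} (hΦ : Measurable Φ) (hΦ' : Measurable Φ')
    (hderiv : ∀ r, HasLineDerivAt ℝ Φ (Φ' r) r fun τ ↦ cov[X, Y τ; P])
    (hΦ_int : Integrable (fun ω ↦ Φ (Y · ω)) P)
    (hmul_int : Integrable (fun ω ↦ X ω * Φ (Y · ω)) P)
    (hΦ'_int : Integrable (fun ω ↦ Φ' (Y · ω)) P) :
    ∫ ω, X ω * Φ (Y · ω) ∂P = ∫ ω, Φ' (Y · ω) ∂P := by
  have := hXY.isProbabilityMeasure
  have hX : HasGaussianLaw X P := hXY.hasGaussianLaw_eval (.inl ())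
  have hY (τ : S) : AEMeasurable (Y τ) P := hXY.aemeasurable (.inr τ)
  set a : S → ℝ := fun τ ↦ cov[X, Y τ; P] / Var[X; P]
  have hcov (τ : S) : cov[X, Y τ; P] = a τ * Var[X; P] :=
    (div_mul_cancel_of_imp (covariance_eq_zero_of_variance_eq_zero hX.memLp_two)).symm
  have hlaw : P.map X = gaussianReal 0 Var[X; P].toNNReal := by
    rw [hX.map_eq_gaussianReal, hX0]
  have hdir : (fun τ ↦ cov[X, Y τ; P]) = Var[X; P].toNNReal • a := by
    ext τ
    rw [hcov, Pi.smul_apply, NNReal.smul_def, coe_toNNReal _ (variance_nonneg _ _), smul_eq_mul,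
      mul_comm]
  have hindep := indepFun_sub_smul hXY hcov
  have hR : AEMeasurable (fun ω τ ↦ Y τ ω - a τ * X ω) P :=
    aemeasurable_pi_lambda _ fun τ ↦ (hY τ).sub (hX.aemeasurable.const_mul _)
  have hdecomp (ω : Ω) : (Y · ω) = (fun τ ↦ Y τ ω - a τ * X ω) + X ω • a := by
    ext τ
    simp [mul_comm]
  have hline : Measurable fun p : ℝ × (S → ℝ) ↦ p.2 + p.1 • a := by fun_prop
  simp only [hdecomp] at hΦ_int hmul_int hΦ'_int ⊢
  obtain ⟨hΦ_sec, -⟩ := integral_comp_eq_integral_integral_of_indepFun hindep hX.aemeasurable hR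
    (hΦ.comp hline) hΦ_int
  obtain ⟨hmul_sec, hmul_eq⟩ := integral_comp_eq_integral_integral_of_indepFun hindep
    hX.aemeasurable hR (measurable_fst.mul (hΦ.comp hline)) hmul_int
  obtain ⟨hΦ'_sec, hΦ'_eq⟩ := integral_comp_eq_integral_integral_of_indepFun hindep
    hX.aemeasurable hR (hΦ'.comp hline) hΦ'_int
  refine hmul_eq.trans (Eq.trans (integral_congr_ae ?_) hΦ'_eq.symm)
  filter_upwards [hΦ_sec, hmul_sec, hΦ'_sec] with r hΦ_r hmul_r hΦ'_r
  rw [hlaw] at hΦ_r hmul_r hΦ'_r ⊢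
  exact integral_mul_comp_add_smul_gaussianReal (fun r ↦ hdir ▸ hderiv r) hΦ_r hmul_r hΦ'_r

end GaussianIntegrationByParts

section GibbsMeasure

variable {S : Type*}

/-- The partition function `Z = ∑ τ, e^{r τ} w τ` of the reference weights `w` tilted by the
energy `r`; it is `0` when the series diverges. -/
def gibbsPartition (w r : S → ℝ) : ℝ :=
  ∑' τ, exp (r τ) * w τ

/-- The Gibbs weights `G σ = e^{r σ} w σ / Z` of a deterministic energy `r`, so that
`gibbsW y w σ ω` is `gibbsWeight w (y · ω) σ`. They all vanish when `Z = 0`, in particular when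
the series defining `Z` diverges. -/
def gibbsWeight (w r : S → ℝ) (σ : S) : ℝ :=
  exp (r σ) * w σ / gibbsPartition w r

/-- The Gibbs average `⟨g⟩ = ∑ τ, g τ * G τ`. -/
def gibbsMean (w r g : S → ℝ) : ℝ :=
  ∑' τ, g τ * gibbsWeight w r τ

variable {w r c : S → ℝ} {A : ℝ}

lemma summable_of_gibbsPartition_ne_zero (hZ : gibbsPartition w r ≠ 0) :
    Summable fun τ ↦ exp (r τ) * w τ := by
  by_contra hs
  exact hZ (tsum_eq_zero_of_not_summable hs)

lemma gibbsWeight_eq_zero_or_hasSum_one (w r : S → ℝ) :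
    gibbsWeight w r = 0 ∨ HasSum (gibbsWeight w r) 1 := by
  rcases eq_or_ne (gibbsPartition w r) 0 with hZ | hZ
  · exact .inl (funext fun σ ↦ by simp [gibbsWeight, hZ])
  · exact .inr (div_self hZ ▸ (summable_of_gibbsPartition_ne_zero hZ).hasSum.div_const _)

lemma summable_gibbsWeight (w r : S → ℝ) : Summable (gibbsWeight w r) := by
  rcases gibbsWeight_eq_zero_or_hasSum_one w r with h | h
  · exact h ▸ summable_zero
  · exact h.summable

lemma tsum_gibbsWeight_le_one (w r : S → ℝ) : ∑' σ, gibbsWeight w r σ ≤ 1 := by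
  rcases gibbsWeight_eq_zero_or_hasSum_one w r with h | h
  · simp [h]
  · exact h.tsum_eq.le

lemma gibbsWeight_nonneg (hw : ∀ σ, 0 ≤ w σ) (r : S → ℝ) (σ : S) : 0 ≤ gibbsWeight w r σ :=
  div_nonneg (mul_nonneg (exp_pos _).le (hw σ))
    (tsum_nonneg fun τ ↦ mul_nonneg (exp_pos _).le (hw τ))

lemma tsum_enorm_gibbsWeight_le_one (hw : ∀ σ, 0 ≤ w σ) (r : S → ℝ) :
    ∑' σ, ‖gibbsWeight w r σ‖ₑ ≤ 1 := by
  simp only [Real.enorm_of_nonneg (gibbsWeight_nonneg hw r _)]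
  rw [← ENNReal.ofReal_tsum_of_nonneg (gibbsWeight_nonneg hw r) (summable_gibbsWeight w r)]
  exact ENNReal.ofReal_le_one.2 (tsum_gibbsWeight_le_one w r)

lemma gibbsWeight_le_one (hw : ∀ σ, 0 ≤ w σ) (r : S → ℝ) (σ : S) : gibbsWeight w r σ ≤ 1 :=
  ((summable_gibbsWeight w r).le_tsum σ fun τ _ ↦ gibbsWeight_nonneg hw r τ).trans
    (tsum_gibbsWeight_le_one w r)

lemma gibbsWeight_le_exp_sub_mul (hw : ∀ σ, 0 ≤ w σ) {τ : S} (hτ : 0 < w τ) (r : S → ℝ) (σ : S) :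
    gibbsWeight w r σ ≤ exp (r σ - r τ) * (w σ / w τ) := by
  have hwσ := hw σ
  rcases eq_or_ne (gibbsPartition w r) 0 with hZ | hZ
  · simp only [gibbsWeight, hZ, div_zero]
    positivity
  · have hle : exp (r τ) * w τ ≤ gibbsPartition w r :=
      (summable_of_gibbsPartition_ne_zero hZ).le_tsum τ fun σ _ ↦ mul_nonneg (exp_pos _).le (hw σ)
    calc gibbsWeight w r σ ≤ exp (r σ) * w σ / (exp (r τ) * w τ) := by
          unfold gibbsWeight
          gcongr
      _ = exp (r σ - r τ) * (w σ / w τ) := by rw [exp_sub, div_mul_div_comm]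

lemma abs_prod_gibbsWeight_le_one {ι : Type*} [Fintype ι] (hw : ∀ σ, 0 ≤ w σ) (r : S → ℝ)
    (σs : ι → S) : |∏ i, gibbsWeight w r (σs i)| ≤ 1 := by
  rw [abs_of_nonneg (Finset.prod_nonneg fun i _ ↦ gibbsWeight_nonneg hw r (σs i))]
  exact Finset.prod_le_one (fun i _ ↦ gibbsWeight_nonneg hw r (σs i)) fun i _ ↦
    gibbsWeight_le_one hw r (σs i)

lemma norm_mul_gibbsWeight_le (hw : ∀ σ, 0 ≤ w σ) (r : S → ℝ) (hc : ∀ τ, |c τ| ≤ A) (τ : S) :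
    ‖c τ * gibbsWeight w r τ‖ ≤ A * gibbsWeight w r τ := by
  rw [norm_mul, norm_of_nonneg (gibbsWeight_nonneg hw r τ), norm_eq_abs]
  exact mul_le_mul_of_nonneg_right (hc τ) (gibbsWeight_nonneg hw r τ)

lemma summable_mul_gibbsWeight (hw : ∀ σ, 0 ≤ w σ) (r : S → ℝ) (hc : ∀ τ, |c τ| ≤ A) :
    Summable fun τ ↦ c τ * gibbsWeight w r τ :=
  .of_norm_bounded ((summable_gibbsWeight w r).mul_left A) (norm_mul_gibbsWeight_le hw r hc)

lemma abs_gibbsMean_le (hw : ∀ σ, 0 ≤ w σ) (r : S → ℝ) (hA : 0 ≤ A) (hc : ∀ τ, |c τ| ≤ A) :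
    |gibbsMean w r c| ≤ A :=
  calc |gibbsMean w r c| ≤ ∑' τ, A * gibbsWeight w r τ :=
        tsum_of_norm_bounded ((summable_gibbsWeight w r).mul_left A).hasSum
          (norm_mul_gibbsWeight_le hw r hc)
    _ = A * ∑' τ, gibbsWeight w r τ := tsum_mul_left
    _ ≤ A := mul_le_of_le_one_right hA (tsum_gibbsWeight_le_one w r)

lemma abs_sum_sub_gibbsMean_le {ι : Type*} [Fintype ι] (hw : ∀ σ, 0 ≤ w σ) (r : S → ℝ)
    (hA : 0 ≤ A) (hc : ∀ τ, |c τ| ≤ A) (σs : ι → S) :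
    |∑ i, (c (σs i) - gibbsMean w r c)| ≤ Fintype.card ι * (2 * A) :=
  calc |∑ i, (c (σs i) - gibbsMean w r c)| ≤ ∑ i, |c (σs i) - gibbsMean w r c| :=
        Finset.abs_sum_le_sum_abs _ _
    _ ≤ ∑ _i : ι, 2 * A := by
        gcongr with i
        exact (abs_sub _ _).trans (by linarith [hc (σs i), abs_gibbsMean_le hw r hA hc])
    _ = Fintype.card ι * (2 * A) := by simp

lemma gibbsMean_const_sub (hw : ∀ σ, 0 ≤ w σ) (hc : ∀ τ, |c τ| ≤ A)
    (hG : HasSum (gibbsWeight w r) 1) (a : ℝ) :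
    gibbsMean w r (fun τ ↦ a - c τ) = a - gibbsMean w r c := by
  have : HasSum (fun τ ↦ (a - c τ) * gibbsWeight w r τ) (a * 1 - gibbsMean w r c) := by
    simpa only [sub_mul] using! (hG.mul_left a).sub (summable_mul_gibbsWeight hw r hc).hasSum
  rw [gibbsMean, this.tsum_eq, mul_one]

lemma measurable_gibbsWeight [Countable S] (w : S → ℝ) (σ : S) :
    Measurable fun r ↦ gibbsWeight w r σ := by
  unfold gibbsWeight gibbsPartition
  fun_prop

lemma measurable_gibbsMean [Countable S] (w c : S → ℝ) : Measurable fun r ↦ gibbsMean w r c :=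
  Measurable.tsum fun τ ↦ (measurable_gibbsWeight w τ).const_mul _

lemma summable_exp_add_mul (hw : ∀ σ, 0 ≤ w σ) (hc : ∀ τ, |c τ| ≤ A)
    (hs : Summable fun τ ↦ exp (r τ) * w τ) : Summable fun τ ↦ exp ((r + c) τ) * w τ := by
  refine .of_nonneg_of_le (fun τ ↦ mul_nonneg (exp_pos _).le (hw τ)) (fun τ ↦ ?_)
    (hs.mul_left (exp A))
  rw [Pi.add_apply, add_comm, exp_add, mul_assoc]
  gcongr
  · exact mul_nonneg (exp_pos _).le (hw τ)
  · exact (le_abs_self _).trans (hc τ)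

lemma gibbsPartition_add_ne_zero (hw : ∀ σ, 0 ≤ w σ) (hc : ∀ τ, |c τ| ≤ A)
    (hZ : gibbsPartition w r ≠ 0) : gibbsPartition w (r + c) ≠ 0 := by
  have hs := summable_of_gibbsPartition_ne_zero hZ
  intro hZ0
  have hterms := ((summable_exp_add_mul hw hc hs).hasSum_iff.2 hZ0)
  rw [hasSum_zero_iff_of_nonneg fun τ ↦ mul_nonneg (exp_pos _).le (hw τ)] at hterms
  have hw0 : w = 0 := funext fun τ ↦
    (mul_eq_zero.1 (congr_fun hterms τ)).resolve_left (exp_ne_zero _)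
  exact hZ (by simp [gibbsPartition, hw0])

lemma hasLineDerivAt_gibbsPartition (hw : ∀ σ, 0 ≤ w σ) (hc : ∀ τ, |c τ| ≤ A)
    (hs : Summable fun τ ↦ exp (r τ) * w τ) :
    HasLineDerivAt ℝ (gibbsPartition w) (∑' τ, c τ * (exp (r τ) * w τ)) r c := by
  have hterm (τ : S) (t : ℝ) : HasDerivAt (fun t : ℝ ↦ exp ((r + t • c) τ) * w τ)
      (c τ * (exp ((r + t • c) τ) * w τ)) t := by
    refine ((((hasDerivAt_id t).mul_const (c τ)).const_add (r τ)).exp.mul_const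
      (w τ)).congr_deriv ?_
    simp only [id, Pi.add_apply, Pi.smul_apply, smul_eq_mul]
    ring
  have hbound (τ : S) (t : ℝ) (ht : t ∈ Metric.ball (0 : ℝ) 1) :
      ‖c τ * (exp ((r + t • c) τ) * w τ)‖ ≤ A * (exp A * (exp (r τ) * w τ)) := by
    have hshift : t * c τ ≤ A :=
      calc t * c τ ≤ |t| * |c τ| := abs_mul t (c τ) ▸ le_abs_self _
        _ ≤ 1 * A := mul_le_mul (mem_ball_zero_iff.1 ht).le (hc τ) (abs_nonneg _) zero_le_one
        _ = A := one_mul A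
    have hwτ := hw τ
    have hA := (abs_nonneg _).trans (hc τ)
    rw [norm_mul, norm_of_nonneg (by positivity : 0 ≤ exp ((r + t • c) τ) * w τ),
      ← mul_assoc (exp A), ← exp_add, Pi.add_apply, Pi.smul_apply, smul_eq_mul, add_comm A,
      norm_eq_abs]
    gcongr
    exact hc τ
  have := hasDerivAt_tsum_of_isPreconnected ((hs.mul_left (exp A)).mul_left A) Metric.isOpen_ball
    (convex_ball (0 : ℝ) 1).isPreconnected (fun τ t _ ↦ hterm τ t) hbound
    (Metric.mem_ball_self one_pos) (by simpa using hs) (Metric.mem_ball_self one_pos)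
  simpa [HasLineDerivAt] using! this

lemma hasLineDerivAt_gibbsWeight (hw : ∀ σ, 0 ≤ w σ) (hc : ∀ τ, |c τ| ≤ A) (σ : S) (r : S → ℝ) :
    HasLineDerivAt ℝ (fun r ↦ gibbsWeight w r σ)
      (gibbsWeight w r σ * (c σ - gibbsMean w r c)) r c := by
  rcases eq_or_ne (gibbsPartition w r) 0 with hZ | hZ
  · have hline (t : ℝ) : gibbsPartition w (r + t • c) = 0 := by
      by_contra hZt
      refine gibbsPartition_add_ne_zero (A := |t| * A) (c := -(t • c)) hw (fun τ ↦ ?_) hZt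
        (by simpa)
      simpa [abs_mul] using mul_le_mul_of_nonneg_left (hc τ) (abs_nonneg t)
    simpa [HasLineDerivAt, gibbsWeight, hline, hZ] using hasDerivAt_const (0 : ℝ) (0 : ℝ)
  · have hnum : HasDerivAt (fun t : ℝ ↦ exp ((r + t • c) σ) * w σ) (c σ * (exp (r σ) * w σ)) 0 := by
      simpa [mul_comm, mul_left_comm] using
        ((((hasDerivAt_id (0 : ℝ)).mul_const (c σ)).const_add (r σ)).exp.mul_const (w σ))
    have hmean : gibbsMean w r c = (∑' τ, c τ * (exp (r τ) * w τ)) / gibbsPartition w r := by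
      simp only [gibbsMean, gibbsWeight, ← mul_div_assoc, tsum_div_const]
    have hden := hasLineDerivAt_gibbsPartition hw hc (summable_of_gibbsPartition_ne_zero hZ)
    refine (hnum.div hden (by simpa using hZ)).congr_deriv ?_
    simp only [zero_smul, add_zero, hmean, gibbsWeight]
    field_simp

lemma hasLineDerivAt_prod_gibbsWeight {ι : Type*} [Fintype ι] (hw : ∀ σ, 0 ≤ w σ)
    (hc : ∀ τ, |c τ| ≤ A) (σs : ι → S) (r : S → ℝ) :
    HasLineDerivAt ℝ (fun r ↦ ∏ i, gibbsWeight w r (σs i))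
      ((∏ i, gibbsWeight w r (σs i)) * ∑ i, (c (σs i) - gibbsMean w r c)) r c := by
  refine (HasDerivAt.fun_finsetProd fun i _ ↦
    hasLineDerivAt_gibbsWeight hw hc (σs i) r).congr_deriv ?_
  simp only [zero_smul, add_zero, smul_eq_mul, Finset.mul_sum]
  refine Finset.sum_congr rfl fun i hi ↦ ?_
  rw [← mul_assoc, Finset.prod_erase_mul _ _ hi]

end GibbsMeasure

section ReplicaSums

variable {S : Type*} {n : ℕ}

lemma tsum_prod_eq_prod_tsum (g : Fin n → S → ℝ≥0∞) :
    ∑' σs : Fin n → S, ∏ j, g j (σs j) = ∏ j, ∑' σ, g j σ := by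
  induction n with
  | zero => simp
  | succ n ih =>
    rw [← (Fin.consEquiv fun _ ↦ S).tsum_eq, ENNReal.tsum_prod']
    simp [Fin.consEquiv, Fin.prod_univ_succ, ENNReal.tsum_mul_left, ENNReal.tsum_mul_right, ih]

lemma tsum_mul_prod_le_tsum_mul {g : S → ℝ≥0∞} (hg : ∑' σ, g σ ≤ 1) (a : S → ℝ≥0∞) (i : Fin n) :
    ∑' σs : Fin n → S, a (σs i) * ∏ j, g (σs j) ≤ ∑' σ, a σ * g σ := by
  have hterm (σs : Fin n → S) :
      a (σs i) * ∏ j, g (σs j) = ∏ j, (if j = i then a (σs j) else 1) * g (σs j) := by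
    rw [Finset.prod_mul_distrib]
    simp
  simp only [hterm]
  rw [tsum_prod_eq_prod_tsum fun j σ ↦ (if j = i then a σ else 1) * g σ,
    Fintype.prod_eq_mul_prod_compl i]
  simp only [if_true]
  refine mul_le_of_le_one_right' (Finset.prod_le_one' fun j hj ↦ ?_)
  simpa [Finset.mem_compl.1 hj |> Finset.mem_singleton.not.1] using hg

lemma summable_prod_of_summable_norm {g : Fin n → S → ℝ} (hg : ∀ j, Summable fun σ ↦ ‖g j σ‖) :
    Summable fun σs : Fin n → S ↦ ∏ j, g j (σs j) := by
  refine .of_enorm ?_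
  simp only [enorm_eq_nnnorm, nnnorm_prod, ENNReal.ofNNReal_finsetProd]
  rw [tsum_prod_eq_prod_tsum fun j σ ↦ (‖g j σ‖₊ : ℝ≥0∞)]
  exact ENNReal.prod_ne_top fun j _ ↦ tsum_enorm_ne_top_iff_summable_norm.2 (hg j)

lemma tsum_eq_tsum_tsum_snoc {F : (Fin (n + 1) → S) → ℝ} (hF : Summable F) :
    ∑' σs, F σs = ∑' (σs : Fin n → S) (τ : S), F (Fin.snoc σs τ) := by
  let e : (Fin n → S) × S ≃ (Fin (n + 1) → S) :=
    (Equiv.prodComm _ _).trans (Fin.snocEquiv fun _ ↦ S)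
  rw [← e.tsum_eq]
  exact (e.summable_iff.2 hF).tsum_prod

lemma integral_tsum_of_enorm_le [Countable S] {Ω : Type*} [MeasurableSpace Ω] {P : Measure Ω}
    {F : (Fin n → S) → Ω → ℝ} {a g : S → Ω → ℝ≥0∞} {K : ℝ≥0∞}
    (hF : ∀ σs, AEStronglyMeasurable (F σs) P) (i : Fin n) (hK : K ≠ ∞)
    (hbound : ∀ σs ω, ‖F σs ω‖ₑ ≤ K * (a (σs i) ω * ∏ j, g (σs j) ω))
    (hg : ∀ ω, ∑' σ, g σ ω ≤ 1) (ha : ∫⁻ ω, ∑' σ, a σ ω * g σ ω ∂P ≠ ∞) :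
    ∫ ω, ∑' σs, F σs ω ∂P = ∑' σs, ∫ ω, F σs ω ∂P := by
  refine integral_tsum hF ?_
  rw [← lintegral_tsum fun σs ↦ (hF σs).enorm]
  refine ne_top_of_le_ne_top (ENNReal.mul_ne_top hK ha) ?_
  rw [← lintegral_const_mul' K _ hK]
  refine lintegral_mono fun ω ↦ ?_
  calc ∑' σs, ‖F σs ω‖ₑ ≤ ∑' σs : Fin n → S, K * (a (σs i) ω * ∏ j, g (σs j) ω) :=
        ENNReal.tsum_le_tsum fun σs ↦ hbound σs ω
    _ = K * ∑' σs : Fin n → S, a (σs i) ω * ∏ j, g (σs j) ω := ENNReal.tsum_mul_left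
    _ ≤ K * ∑' σ, a σ ω * g σ ω := by
        gcongr
        exact tsum_mul_prod_le_tsum_mul (hg ω) (a · ω) i

end ReplicaSums

section GaussianGibbs

variable {Ω S : Type*} [MeasurableSpace Ω] {P : Measure Ω}

lemma aemeasurable_gibbsWeight_comp [Countable S] {y : S → Ω → ℝ} (hy : ∀ τ, AEMeasurable (y τ) P)
    (w : S → ℝ) (σ : S) : AEMeasurable (fun ω ↦ gibbsWeight w (y · ω) σ) P :=
  (measurable_gibbsWeight w σ).comp_aemeasurable (aemeasurable_pi_lambda _ hy)

lemma integrable_exp_mul_of_hasGaussianLaw {U : Ω → ℝ} (hU : HasGaussianLaw U P) (t : ℝ) :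
    Integrable (fun ω ↦ exp (t * U ω)) P := by
  have := hU.map_eq_gaussianReal ▸ integrable_exp_mul_gaussianReal (μ := P[U])
    (v := Var[U; P].toNNReal) t
  exact (integrable_map_measure (by fun_prop) hU.aemeasurable).1 this

lemma mgf_le_exp_of_integral_sq_le {U : Ω → ℝ} {M : ℝ} (hU : HasGaussianLaw U P)
    (hM : ∫ ω, U ω ^ 2 ∂P ≤ M) (t : ℝ) : mgf U P t ≤ exp ((1 + t ^ 2 * M) / 2) := by
  have := hU.isProbabilityMeasure
  have hvar : Var[U; P] + P[U] ^ 2 ≤ M := by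
    rw [variance_eq_sub hU.memLp_two, sub_add_cancel]
    exact hM
  rw [mgf_gaussianReal hU.map_eq_gaussianReal, Real.coe_toNNReal _ (variance_nonneg _ _)]
  gcongr
  nlinarith [sq_nonneg (P[U] * t - 1), mul_le_mul_of_nonneg_left hvar (sq_nonneg t)]

lemma lintegral_enorm_mul_exp_sub_le {X U V : Ω → ℝ} {M : ℝ} (hX : MemLp X 2 P)
    (hU : HasGaussianLaw U P) (hV : HasGaussianLaw V P) (hXM : ∫ ω, X ω ^ 2 ∂P ≤ M)
    (hUM : ∫ ω, U ω ^ 2 ∂P ≤ M) (hVM : ∫ ω, V ω ^ 2 ∂P ≤ M) :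
    ∫⁻ ω, ‖X ω * exp (U ω - V ω)‖ₑ ∂P ≤
      ENNReal.ofReal (M + exp ((1 + 16 * M) / 2) + exp ((1 + 16 * M) / 2)) := by
  have hX_int : Integrable (fun ω ↦ X ω ^ 2) P := hX.integrable_sq
  have hU_int := integrable_exp_mul_of_hasGaussianLaw hU 4
  have hV_int := integrable_exp_mul_of_hasGaussianLaw hV (-4)
  have hXU_int : Integrable (fun ω ↦ X ω ^ 2 + exp (4 * U ω)) P := hX_int.add hU_int
  have hpointwise (ω : Ω) :
      ‖X ω * exp (U ω - V ω)‖ ≤ X ω ^ 2 + exp (4 * U ω) + exp (-4 * V ω) := by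
    have hU4 : exp (4 * U ω) = exp (U ω) ^ 4 := mod_cast exp_nat_mul (U ω) 4
    have hV4 : exp (-4 * V ω) = exp (-V ω) ^ 4 := by
      rw [neg_mul_comm]
      exact mod_cast exp_nat_mul (-V ω) 4
    rw [norm_mul, norm_of_nonneg (exp_pos _).le, norm_eq_abs, hU4, hV4, sub_eq_add_neg, exp_add,
      ← sq_abs (X ω)]
    -- AM–GM twice: `|X| e^U e^{-V} ≤ X² + e^{2U} e^{-2V} ≤ X² + e^{4U} + e^{-4V}`.
    nlinarith [sq_nonneg (|X ω| - exp (U ω) * exp (-V ω)), sq_nonneg (|X ω|),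
      sq_nonneg (exp (U ω) ^ 2 - exp (-V ω) ^ 2), sq_nonneg (exp (U ω) ^ 2),
      sq_nonneg (exp (-V ω) ^ 2)]
  calc ∫⁻ ω, ‖X ω * exp (U ω - V ω)‖ₑ ∂P
      ≤ ∫⁻ ω, ENNReal.ofReal (X ω ^ 2 + exp (4 * U ω) + exp (-4 * V ω)) ∂P := by
        gcongr with ω
        rw [← ofReal_norm]
        exact ENNReal.ofReal_le_ofReal (hpointwise ω)
    _ = ENNReal.ofReal ((∫ ω, X ω ^ 2 ∂P) + mgf U P 4 + mgf V P (-4)) := by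
        rw [mgf, mgf, ← integral_add hX_int hU_int, ← integral_add hXU_int hV_int]
        exact (ofReal_integral_eq_lintegral_ofReal (hXU_int.add hV_int)
          (ae_of_all _ fun ω ↦ (norm_nonneg _).trans (hpointwise ω))).symm
    _ ≤ _ := by
        gcongr
        · exact (mgf_le_exp_of_integral_sq_le hU hUM 4).trans_eq (by norm_num)
        · exact (mgf_le_exp_of_integral_sq_le hV hVM (-4)).trans_eq (by norm_num)

lemma covariance_eq_integral_mul [IsProbabilityMeasure P] {X Y : Ω → ℝ} (hX : MemLp X 2 P)
    (hY : MemLp Y 2 P) (hX0 : ∫ ω, X ω ∂P = 0) : cov[X, Y; P] = ∫ ω, X ω * Y ω ∂P := by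
  rw [covariance_eq_sub hX hY, hX0, zero_mul, sub_zero]
  rfl

lemma abs_integral_mul_le {X Y : Ω → ℝ} {M : ℝ} (hX : MemLp X 2 P) (hY : MemLp Y 2 P)
    (hXM : ∫ ω, X ω ^ 2 ∂P ≤ M) (hYM : ∫ ω, Y ω ^ 2 ∂P ≤ M) : |∫ ω, X ω * Y ω ∂P| ≤ M :=
  calc |∫ ω, X ω * Y ω ∂P| ≤ ∫ ω, |X ω * Y ω| ∂P := abs_integral_le_integral_abs
    _ ≤ ∫ ω, (X ω ^ 2 + Y ω ^ 2) / 2 ∂P := by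
        refine integral_mono (hX.integrable_mul hY).abs
          ((hX.integrable_sq.add hY.integrable_sq).div_const 2) fun ω ↦ ?_
        exact abs_le.2 ⟨by linarith [sq_nonneg (X ω + Y ω)], by linarith [sq_nonneg (X ω - Y ω)]⟩
    _ = ((∫ ω, X ω ^ 2 ∂P) + ∫ ω, Y ω ^ 2 ∂P) / 2 := by
        rw [integral_div, integral_add hX.integrable_sq hY.integrable_sq]
    _ ≤ M := by linarith

lemma integral_mul_prod_gibbsWeight [Countable S] {X : Ω → ℝ} {Y : S → Ω → ℝ} {w : S → ℝ}
    (hXY : IsGaussianProcess (Sum.elim (fun _ : Unit ↦ X) Y) P) (hX0 : ∫ ω, X ω ∂P = 0)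
    (hw : ∀ σ, 0 ≤ w σ) {A : ℝ} (hA : 0 ≤ A) (hcov : ∀ τ, |cov[X, Y τ; P]| ≤ A) {ι : Type*}
    [Fintype ι] (σs : ι → S) :
    ∫ ω, X ω * ∏ i, gibbsWeight w (Y · ω) (σs i) ∂P =
      ∫ ω, (∏ i, gibbsWeight w (Y · ω) (σs i)) *
        ∑ i, (cov[X, Y (σs i); P] - gibbsMean w (Y · ω) fun τ ↦ cov[X, Y τ; P]) ∂P := by
  have := hXY.isProbabilityMeasure
  have hY : AEMeasurable (fun ω τ ↦ Y τ ω) P := aemeasurable_pi_lambda _ fun τ ↦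
    hXY.aemeasurable (.inr τ)
  have hX : Integrable X P := (hXY.hasGaussianLaw_eval (.inl ())).integrable
  have hΦ : Measurable fun r ↦ ∏ i, gibbsWeight w r (σs i) :=
    Finset.measurable_prod _ fun i _ ↦ measurable_gibbsWeight w (σs i)
  have hΦ' : Measurable fun r ↦ (∏ i, gibbsWeight w r (σs i)) *
      ∑ i, (cov[X, Y (σs i); P] - gibbsMean w r fun τ ↦ cov[X, Y τ; P]) :=
    hΦ.mul (Finset.measurable_sum _ fun i _ ↦ (measurable_gibbsMean w _).const_sub _)
  have hΦ_int : Integrable (fun ω ↦ ∏ i, gibbsWeight w (Y · ω) (σs i)) P :=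
    .of_bound (hΦ.comp_aemeasurable hY).aestronglyMeasurable 1
      (ae_of_all _ fun ω ↦ abs_prod_gibbsWeight_le_one hw _ σs)
  refine integral_mul_comp_eq_integral_lineDeriv hXY hX0 hΦ hΦ'
    (hasLineDerivAt_prod_gibbsWeight hw hcov σs) hΦ_int
    (hX.mul_bdd hΦ_int.aestronglyMeasurable
      (ae_of_all _ fun ω ↦ abs_prod_gibbsWeight_le_one hw _ σs)) ?_
  refine .of_bound (hΦ'.comp_aemeasurable hY).aestronglyMeasurable (1 * (Fintype.card ι * (2 * A)))
    (ae_of_all _ fun ω ↦ ?_)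
  rw [norm_mul]
  exact mul_le_mul (abs_prod_gibbsWeight_le_one hw _ σs)
    (abs_sum_sub_gibbsMean_le hw _ hA hcov σs) (abs_nonneg _) zero_le_one

lemma lintegral_tsum_enorm_gibbsWeight_le_one [IsProbabilityMeasure P] {w : S → ℝ}
    (hw : ∀ σ, 0 ≤ w σ) (y : S → Ω → ℝ) : ∫⁻ ω, ∑' σ, ‖gibbsWeight w (y · ω) σ‖ₑ ∂P ≤ 1 :=
  calc ∫⁻ ω, ∑' σ, ‖gibbsWeight w (y · ω) σ‖ₑ ∂P ≤ ∫⁻ _, 1 ∂P := by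
        gcongr with ω
        exact tsum_enorm_gibbsWeight_le_one hw (y · ω)
    _ = 1 := by simp

lemma lintegral_tsum_enorm_mul_gibbsWeight_ne_top [Countable S] {x y : S → Ω → ℝ} {w : S → ℝ}
    {M : ℝ} (hx : ∀ σ, HasGaussianLaw (x σ) P) (hy : ∀ σ, HasGaussianLaw (y σ) P)
    (hxM : ∀ σ, ∫ ω, x σ ω ^ 2 ∂P ≤ M) (hyM : ∀ σ, ∫ ω, y σ ω ^ 2 ∂P ≤ M) (hw : ∀ σ, 0 ≤ w σ)
    (hsum : Summable w) :
    ∫⁻ ω, ∑' σ, ‖x σ ω‖ₑ * ‖gibbsWeight w (y · ω) σ‖ₑ ∂P ≠ ∞ := by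
  by_cases hw0 : w = 0
  · simp [hw0, gibbsWeight]
  obtain ⟨τ, hτ⟩ := Function.ne_iff.1 hw0
  replace hτ : 0 < w τ := (hw τ).lt_of_ne' hτ
  rw [lintegral_tsum fun σ ↦ by
    exact (hx σ).aemeasurable.enorm.mul
      (aemeasurable_gibbsWeight_comp (fun τ ↦ (hy τ).aemeasurable) w σ).enorm]
  set K := M + exp ((1 + 16 * M) / 2) + exp ((1 + 16 * M) / 2)
  have hterm (σ : S) : ∫⁻ ω, ‖x σ ω‖ₑ * ‖gibbsWeight w (y · ω) σ‖ₑ ∂P ≤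
      ENNReal.ofReal K * ‖w σ / w τ‖ₑ :=
    calc ∫⁻ ω, ‖x σ ω‖ₑ * ‖gibbsWeight w (y · ω) σ‖ₑ ∂P
        ≤ ∫⁻ ω, ‖x σ ω * exp (y σ ω - y τ ω)‖ₑ * ‖w σ / w τ‖ₑ ∂P := by
          refine lintegral_mono fun ω ↦ ?_
          rw [← enorm_mul, ← enorm_mul, mul_assoc, enorm_mul, enorm_mul (x σ ω)]
          gcongr
          rw [enorm_le_iff_norm_le, norm_of_nonneg (gibbsWeight_nonneg hw _ σ)]
          exact (gibbsWeight_le_exp_sub_mul hw hτ (y · ω) σ).trans (Real.le_norm_self _)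
      _ = (∫⁻ ω, ‖x σ ω * exp (y σ ω - y τ ω)‖ₑ ∂P) * ‖w σ / w τ‖ₑ :=
          lintegral_mul_const' _ _ enorm_ne_top
      _ ≤ ENNReal.ofReal K * ‖w σ / w τ‖ₑ := by
          gcongr
          exact lintegral_enorm_mul_exp_sub_le (hx σ).memLp_two (hy σ) (hy τ) (hxM σ) (hyM σ)
            (hyM τ)
  refine ne_top_of_le_ne_top ?_ (ENNReal.tsum_le_tsum hterm)
  rw [ENNReal.tsum_mul_left]
  exact ENNReal.mul_ne_top ENNReal.ofReal_ne_top
    (tsum_enorm_ne_top_iff_summable_norm.2 (hsum.div_const _).norm)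

end GaussianGibbs

section ReplicaIdentity

variable {n : ℕ} {A K : ℝ}

lemma tsum_replicas_succ_eq {S : Type*} {w : S → ℝ} (hw : ∀ σ, 0 ≤ w σ) (r : S → ℝ)
    {C : S → S → ℝ} (hC : ∀ σ τ, |C σ τ| ≤ A) (i : Fin n) {f : (Fin n → S) → ℝ}
    (hf : ∀ σs, |f σs| ≤ K) :
    ∑' σs : Fin (n + 1) → S, f (fun k ↦ σs k.castSucc) *
        ((∑ k : Fin n, C (σs i.castSucc) (σs k.castSucc)) -
          n * C (σs i.castSucc) (σs (Fin.last n))) * ∏ j, gibbsWeight w r (σs j) =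
      ∑' σs : Fin n → S, f σs *
        (∑ k, (C (σs i) (σs k) - gibbsMean w r (C (σs i)))) * ∏ j, gibbsWeight w r (σs j) := by
  have hnC (σ τ : S) : |n * C σ τ| ≤ n * A := by
    rw [abs_mul, Nat.abs_cast]
    exact mul_le_mul_of_nonneg_left (hC σ τ) n.cast_nonneg
  rw [tsum_eq_tsum_tsum_snoc]
  · refine tsum_congr fun σs ↦ ?_
    simp only [Fin.prod_univ_castSucc, Fin.snoc_castSucc, Fin.snoc_last]
    rcases gibbsWeight_eq_zero_or_hasSum_one w r with hG | hG
    · simp [hG, i.pos.ne']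
    calc ∑' τ, f σs * ((∑ k, C (σs i) (σs k)) - n * C (σs i) τ) *
          ((∏ j, gibbsWeight w r (σs j)) * gibbsWeight w r τ)
        = f σs * (∏ j, gibbsWeight w r (σs j)) *
            gibbsMean w r fun τ ↦ (∑ k, C (σs i) (σs k)) - n * C (σs i) τ := by
          rw [gibbsMean, ← tsum_mul_left]
          congr 1 with τ
          ring
      _ = _ := by
          rw [gibbsMean_const_sub hw (hnC (σs i)) hG, Finset.sum_sub_distrib, gibbsMean, gibbsMean]
          simp only [Finset.sum_const, Finset.card_univ, Fintype.card_fin, nsmul_eq_mul, mul_assoc,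
            tsum_mul_left]
          ring
  · refine .of_norm_bounded ((summable_prod_of_summable_norm fun _ ↦
      (summable_gibbsWeight w r).norm).norm.mul_left (K * (n * A + n * A))) fun σs ↦ ?_
    rw [norm_mul, norm_mul]
    gcongr
    · exact (abs_nonneg _).trans (hf fun k ↦ σs k.castSucc)
    · exact hf _
    refine (norm_sub_le _ _).trans (add_le_add ?_ (hnC _ _))
    exact (norm_sum_le_of_le _ fun k _ ↦ hC _ _).trans_eq (by simp)

lemma tsum_tsum_sub_mul_gibbsWeight {S : Type*} {w : S → ℝ} (hw : ∀ σ, 0 ≤ w σ) (r : S → ℝ)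
    {C : S → S → ℝ} (hC : ∀ σ τ, |C σ τ| ≤ A) :
    ∑' σ, ∑' τ, (C σ σ - C σ τ) * (gibbsWeight w r σ * gibbsWeight w r τ) =
      ∑' σ, (C σ σ - gibbsMean w r (C σ)) * gibbsWeight w r σ := by
  rcases gibbsWeight_eq_zero_or_hasSum_one w r with hG | hG
  · simp [hG]
  refine tsum_congr fun σ ↦ ?_
  rw [← gibbsMean_const_sub hw (hC σ) hG, gibbsMean, ← tsum_mul_right]
  congr 1 with τ
  ring

lemma integral_tsum_mul_prod_gibbsWeight_comm {Ω S : Type*} [MeasurableSpace Ω] {P : Measure Ω}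
    [Countable S] {y : S → Ω → ℝ} {w : S → ℝ} (hy : ∀ τ, AEMeasurable (y τ) P) (hw : ∀ σ, 0 ≤ w σ)
    {F : (Fin n → S) → Ω → ℝ} {a : S → Ω → ℝ≥0∞} {B : ℝ} (hF : ∀ σs, AEMeasurable (F σs) P)
    (i : Fin n) (hbound : ∀ σs ω, ‖F σs ω‖ₑ ≤ ENNReal.ofReal B * a (σs i) ω)
    (ha : ∫⁻ ω, ∑' σ, a σ ω * ‖gibbsWeight w (y · ω) σ‖ₑ ∂P ≠ ∞) :
    ∫ ω, ∑' σs, F σs ω * ∏ j, gibbsWeight w (y · ω) (σs j) ∂P =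
      ∑' σs, ∫ ω, F σs ω * ∏ j, gibbsWeight w (y · ω) (σs j) ∂P := by
  refine integral_tsum_of_enorm_le (K := .ofReal B) (fun σs ↦ ?_) i ENNReal.ofReal_ne_top
    (fun σs ω ↦ ?_) (fun ω ↦ tsum_enorm_gibbsWeight_le_one hw (y · ω)) ha
  · exact ((hF σs).mul (Finset.aemeasurable_fun_prod _ fun j _ ↦
      aemeasurable_gibbsWeight_comp hy w (σs j))).aestronglyMeasurable
  · rw [enorm_mul, ← mul_assoc]
    simp only [enorm_eq_nnnorm, nnnorm_prod, ENNReal.ofNNReal_finsetProd]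
    gcongr
    exact hbound σs ω

theorem integral_tsum_mul_prod_gibbsWeight {Ω S : Type*} [MeasurableSpace Ω] {P : Measure Ω}
    [Countable S] {x y : S → Ω → ℝ} {w : S → ℝ} {M : ℝ}
    (hgauss : IsGaussianProcess (Sum.elim x y) P) (hx0 : ∀ σ, ∫ ω, x σ ω ∂P = 0)
    (hxM : ∀ σ, ∫ ω, x σ ω ^ 2 ∂P ≤ M) (hyM : ∀ σ, ∫ ω, y σ ω ^ 2 ∂P ≤ M)
    (hw : ∀ σ, 0 ≤ w σ) (hsum : Summable w)
    (hC : ∀ σ τ, |cov[x σ, y τ; P]| ≤ A) (i : Fin n) {f : (Fin n → S) → ℝ}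
    (hf : ∀ σs, |f σs| ≤ K) :
    ∫ ω, ∑' σs : Fin n → S, f σs * x (σs i) ω * ∏ j, gibbsWeight w (y · ω) (σs j) ∂P =
      ∫ ω, ∑' σs : Fin n → S, f σs * (∑ k, (cov[x (σs i), y (σs k); P] -
        gibbsMean w (y · ω) fun τ ↦ cov[x (σs i), y τ; P])) *
          ∏ j, gibbsWeight w (y · ω) (σs j) ∂P := by
  have := hgauss.isProbabilityMeasure
  have hx (σ : S) : HasGaussianLaw (x σ) P := hgauss.hasGaussianLaw_eval (.inl σ)
  have hy (σ : S) : HasGaussianLaw (y σ) P := hgauss.hasGaussianLaw_eval (.inr σ)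
  have hxy (σ : S) : IsGaussianProcess (Sum.elim (fun _ : Unit ↦ x σ) y) P := by
    simpa only [Sum.elim_comp_map] using! hgauss.comp_right (Sum.map (fun _ : Unit ↦ σ) id)
  have hy_meas (σ : S) : AEMeasurable (y σ) P := (hy σ).aemeasurable
  have hA (σ : S) : 0 ≤ A := (abs_nonneg _).trans (hC σ σ)
  have hmean (g : S → ℝ) : AEMeasurable (fun ω ↦ gibbsMean w (y · ω) g) P :=
    (measurable_gibbsMean w g).comp_aemeasurable (aemeasurable_pi_lambda _ hy_meas)
  have hmass : ∫⁻ ω, ∑' σ, 1 * ‖gibbsWeight w (y · ω) σ‖ₑ ∂P ≠ ∞ := by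
    simpa only [one_mul] using ne_top_of_le_ne_top ENNReal.one_ne_top
      (lintegral_tsum_enorm_gibbsWeight_le_one hw y)
  rw [integral_tsum_mul_prod_gibbsWeight_comm (a := fun σ ω ↦ ‖x σ ω‖ₑ) (B := K) hy_meas hw
      (fun σs ↦ (hx _).aemeasurable.const_mul _) i (fun σs ω ↦ ?_)
      (lintegral_tsum_enorm_mul_gibbsWeight_ne_top hx hy hxM hyM hw hsum),
    integral_tsum_mul_prod_gibbsWeight_comm (a := fun _ _ ↦ 1) (B := K * (n * (2 * A))) hy_meas hw
      (fun σs ↦ (Finset.aemeasurable_fun_sum _ fun k _ ↦ (hmean _).const_sub _).const_mul _) i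
      (fun σs ω ↦ ?_) hmass]
  · refine tsum_congr fun σs ↦ ?_
    simp only [mul_assoc, integral_const_mul]
    rw [integral_mul_prod_gibbsWeight (hxy _) (hx0 _) hw (hA (σs i)) (hC _) σs]
    simp only [mul_comm]
  · rw [mul_one, Real.enorm_eq_ofReal_abs, abs_mul]
    have hsum_le := abs_sum_sub_gibbsMean_le hw (y · ω) (hA (σs i)) (hC (σs i)) σs
    rw [Fintype.card_fin] at hsum_le
    exact ENNReal.ofReal_le_ofReal (mul_le_mul (hf σs) hsum_le (abs_nonneg _)
      ((abs_nonneg _).trans (hf σs)))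
  · rw [enorm_mul]
    gcongr
    rw [Real.enorm_eq_ofReal_abs]
    exact ENNReal.ofReal_le_ofReal (hf σs)

end ReplicaIdentity

lemma integral_eq_zero_of_map_sum_eq_gaussianReal {Ω S : Type*} [MeasurableSpace Ω]
    {P : Measure Ω} {X : S → Ω → ℝ} (i : S) (hX : AEMeasurable (X i) P)
    (h : ∀ (s : Finset S) (c : S → ℝ), ∃ v : ℝ≥0,
      P.map (fun ω ↦ ∑ i ∈ s, c i * X i ω) = gaussianReal 0 v) :
    ∫ ω, X i ω ∂P = 0 := by
  obtain ⟨v, hv⟩ := h {i} fun _ ↦ 1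
  simp only [Finset.sum_singleton, one_mul] at hv
  calc ∫ ω, X i ω ∂P = ∫ t, t ∂P.map (X i) := (integral_map hX aestronglyMeasurable_id).symm
    _ = 0 := by rw [hv, integral_id_gaussianReal]

theorem gibbs_gaussian_integration_by_parts_general {Ω S : Type} [MeasurableSpace Ω]
    {P : Measure Ω} [Countable S] {x y : S → Ω → ℝ}
    (hgauss : IsGaussianProcess (Sum.elim x y) P) (hx0 : ∀ σ, ∫ ω, x σ ω ∂P = 0)
    (hvar : ∃ M : ℝ, ∀ σ : S, (∫ ω, x σ ω ^ 2 ∂P) ≤ M ∧ (∫ ω, y σ ω ^ 2 ∂P) ≤ M)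
    {w : S → ℝ} (hw : ∀ σ, 0 ≤ w σ) (hsum : Summable w) :
    (∫ ω, ∑' σ, x σ ω * gibbsW y w σ ω ∂P =
        ∫ ω, ∑' σ₁, ∑' σ₂, (cov P x y σ₁ σ₁ - cov P x y σ₁ σ₂) *
          (gibbsW y w σ₁ ω * gibbsW y w σ₂ ω) ∂P) ∧
      ∀ (n : ℕ) (i : Fin n) (f : (Fin n → S) → ℝ), (∃ M, ∀ σs, |f σs| ≤ M) →
        ∫ ω, ∑' σs : Fin n → S, f σs * x (σs i) ω * ∏ j, gibbsW y w (σs j) ω ∂P =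
          ∫ ω, ∑' σs : Fin (n + 1) → S, f (fun k ↦ σs k.castSucc) *
            ((∑ k : Fin n, cov P x y (σs i.castSucc) (σs k.castSucc)) -
              n * cov P x y (σs i.castSucc) (σs (Fin.last n))) *
            ∏ j, gibbsW y w (σs j) ω ∂P := by
  obtain ⟨M, hM⟩ := hvar
  have := hgauss.isProbabilityMeasure
  have hx (σ : S) : MemLp (x σ) 2 P := (hgauss.hasGaussianLaw_eval (.inl σ)).memLp_two
  have hy (σ : S) : MemLp (y σ) 2 P := (hgauss.hasGaussianLaw_eval (.inr σ)).memLp_two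
  have hcov (σ τ : S) : cov[x σ, y τ; P] = cov P x y σ τ :=
    covariance_eq_integral_mul (hx σ) (hy τ) (hx0 σ)
  have hC (σ τ : S) : |cov P x y σ τ| ≤ M :=
    abs_integral_mul_le (hx σ) (hy τ) (hM σ).1 (hM τ).2
  have hreplica {n : ℕ} (i : Fin n) {f : (Fin n → S) → ℝ} {K : ℝ} (hf : ∀ σs, |f σs| ≤ K) :=
    integral_tsum_mul_prod_gibbsWeight hgauss hx0 (fun σ ↦ (hM σ).1) (fun σ ↦ (hM σ).2) hw hsum
      (fun σ τ ↦ (hcov σ τ).symm ▸ hC σ τ) i hf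
  simp only [hcov] at hreplica
  constructor
  · have hone := hreplica (0 : Fin 1) (f := fun _ ↦ 1) (K := 1) (by simp)
    simp only [← (Equiv.funUnique (Fin 1) S).symm.tsum_eq] at hone
    refine Eq.trans ?_ (hone.trans ?_)
    · simp [gibbsW, gibbsWeight, gibbsPartition]
    · refine integral_congr_ae (ae_of_all _ fun ω ↦ ?_)
      simpa using! (tsum_tsum_sub_mul_gibbsWeight hw (y · ω) hC).symm
  · rintro n i f ⟨K, hf⟩
    refine (hreplica i hf).trans (integral_congr_ae (ae_of_all _ fun ω ↦ ?_))
    exact (tsum_replicas_succ_eq hw (y · ω) hC i hf).symm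

/-- **Gibbs–Gaussian integration by parts** (Lemma 3.2): for jointly Gaussian centered
processes `x, y` on an at most countable set `S` with uniformly bounded variances, a finite
measure `w` on `S`, and the Gibbs measure `G(σ) = e^{y(σ)} w(σ)/Z`, one has
`E⟨x(σ)⟩_G = E⟨C(σ¹,σ¹) - C(σ¹,σ²)⟩_{G^{⊗2}}` and, for bounded measurable `f` on `Sⁿ`,
`E⟨f x(σ¹)⟩_{G^{⊗n}} = E⟨f (∑_{k=1}^n C(σ¹,σᵏ) - n C(σ¹,σ^{n+1}))⟩_{G^{⊗(n+1)}}`. -/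
theorem gibbs_gaussian_integration_by_parts
    {Ω S : Type} [MeasurableSpace Ω] (P : Measure Ω) [IsProbabilityMeasure P]
    [Countable S] [MeasurableSpace S]
    (x y : S → Ω → ℝ) (hx : ∀ σ, Measurable (x σ)) (hy : ∀ σ, Measurable (y σ))
    (hgauss : ∀ (s : Finset (S ⊕ S)) (c : S ⊕ S → ℝ), ∃ var : ℝ≥0,
      P.map (fun ω => ∑ i ∈ s, c i * Sum.elim x y i ω) = gaussianReal 0 var)
    (hvar : ∃ M : ℝ, ∀ σ : S,
      (∫ ω, (x σ ω) ^ 2 ∂P) ≤ M ∧ (∫ ω, (y σ ω) ^ 2 ∂P) ≤ M)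
    (w : S → ℝ) (hw : ∀ σ, 0 ≤ w σ) (hsum : Summable w) :
    ((∫ ω, (∑' σ : S, x σ ω * gibbsW y w σ ω) ∂P) =
        ∫ ω, (∑' σ₁ : S, ∑' σ₂ : S,
          (cov P x y σ₁ σ₁ - cov P x y σ₁ σ₂) *
            (gibbsW y w σ₁ ω * gibbsW y w σ₂ ω)) ∂P) ∧
      ∀ (n : ℕ) (hn : 1 ≤ n) (f : (Fin n → S) → ℝ),
        Measurable f → (∃ M, ∀ σs, |f σs| ≤ M) →
        (∫ ω, (∑' σs : Fin n → S,
            f σs * x (σs ⟨0, hn⟩) ω * ∏ i, gibbsW y w (σs i) ω) ∂P) =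
          ∫ ω, (∑' σs : Fin (n + 1) → S,
            f (fun i => σs i.castSucc) *
              ((∑ k : Fin n, cov P x y (σs (Fin.castSucc ⟨0, hn⟩)) (σs k.castSucc)) -
                n * cov P x y (σs (Fin.castSucc ⟨0, hn⟩)) (σs (Fin.last n))) *
              ∏ i, gibbsW y w (σs i) ω) ∂P := by
  have hgaussian : IsGaussianProcess (Sum.elim x y) P :=
    isGaussianProcess_of_map_sum_eq_gaussianReal
      (Sum.rec (fun σ ↦ (hx σ).aemeasurable) fun σ ↦ (hy σ).aemeasurable)
      fun s c ↦ ⟨0, hgauss s c⟩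
  have hx0 (σ : S) : ∫ ω, x σ ω ∂P = 0 :=
    integral_eq_zero_of_map_sum_eq_gaussianReal (X := Sum.elim x y) (.inl σ)
      (hx σ).aemeasurable hgauss
  have hgeneral := gibbs_gaussian_integration_by_parts_general hgaussian hx0 hvar hw hsum
  exact ⟨hgeneral.1, fun n hn f _ hf ↦ hgeneral.2 n ⟨0, hn⟩ f hf⟩
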